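/- Layered-copy reachability characterization: given a graph G with vertices v_1,...,v_n and an index interval I ⊆ {1,...,n}, construct G_I by adding copies v', v'' of each vertex and edges (u, v_j') and (v_j', w'') for every pair of consecutive edges (u,v_j),(v_j,w) of G with j ∈ I. Then for any s,t: dist_{G_I}(s, t'') = dist_G(s,t) if and only if some shortest s-t path in G has its second-to-last vertex v_j with j ∈ I; otherwise dist_{G_I}(s,t'') > dist_G(s,t). -/

import Mathlib

/-!
Distances from a fixed source satisfy the Bellman equation: `gdist len s t ≤ gdist len s v + len v t`
for all `v`, and, for `s ≠ t` on a finite vertex set, equality holds for some `v`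
(`gdist_le_add`, `exists_gdist_eq`). A vertex map that does not increase edge lengths does not
increase distances (`gdist_map_le`); this applies to the inclusion of `G` in `G_I` and to the
projection of `G_I` onto `G` that forgets the primes. The projection gives
`dist_G(s,t) ≤ dist_{G_I}(s,t'')`.

If equality holds, the Bellman equation at `t''` yields a predecessor, necessarily some `v'` with
`v ∈ I` adjacent to `t`, and projecting shows that `v` precedes `t` on a shortest path of `G`.
Conversely, given such a `v`, the bound `2 ≤ dist_G(s,t)` forces `s ≠ v`, so `v` has a
predecessor `u` on a shortest path, and going to `u` inside `G` and then along `u → v' → t''`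
attains `dist_G(s,t)`.
-/

open scoped ENNReal Classical

variable {V : Type*}

/-- Length of a walk (list of vertices) given edge weights `len`
(`len u v = ∞` means the edge `(u,v)` is absent). -/
noncomputable def walkLen (len : V → V → ℝ≥0∞) : List V → ℝ≥0∞
  | [] => 0
  | [_] => 0
  | u :: v :: rest => len u v + walkLen len (v :: rest)

/-- `p` is a walk starting at `s` and ending at `t`. -/
def IsWalkFromTo (s t : V) (p : List V) : Prop :=
  p.head? = some s ∧ p.getLast? = some t

/-- Shortest-path distance: infimum of lengths of walks from `s` to `t`. -/
noncomputable def gdist (len : V → V → ℝ≥0∞) (s t : V) : ℝ≥0∞ :=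
  ⨅ (p : List V) (_ : IsWalkFromTo s t p), walkLen len p

theorem walkLen_append_pair {α : Type*} (len : α → α → ℝ≥0∞) (p : List α) (v t : α) :
    walkLen len (p ++ [v, t]) = walkLen len (p ++ [v]) + len v t := by
  induction p with
  | nil => simp [walkLen]
  | cons a p ih =>
    cases p with
    | nil => simp [walkLen]
    | cons b p =>
      simp only [List.cons_append, walkLen] at ih ⊢
      rw [ih, add_assoc]

theorem gdist_le_walkLen {α : Type*} (len : α → α → ℝ≥0∞) {s t : α} {p : List α}
    (h : IsWalkFromTo s t p) : gdist len s t ≤ walkLen len p :=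
  iInf₂_le p h

theorem gdist_self {α : Type*} (len : α → α → ℝ≥0∞) (s : α) : gdist len s s = 0 :=
  le_antisymm (gdist_le_walkLen len (p := [s]) ⟨rfl, rfl⟩) bot_le

theorem gdist_le_add {α : Type*} (len : α → α → ℝ≥0∞) (s v t : α) :
    gdist len s t ≤ gdist len s v + len v t := by
  unfold gdist
  simp only [ENNReal.iInf_add]
  refine le_iInf₂ fun p hp => ?_
  obtain ⟨h1, h2⟩ := hp
  obtain ⟨q, rfl⟩ := List.getLast?_eq_some_iff.1 h2
  rw [← walkLen_append_pair]
  refine iInf₂_le (q ++ [v, t]) ⟨?_, by simp⟩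
  cases q <;> simpa using h1

/-- The Bellman infimum over the last edge of a walk is attained because there are finitely many
vertices, so no shortest walk has to be extracted from the infimum defining `gdist`. -/
theorem exists_gdist_eq {α : Type*} [Finite α] (len : α → α → ℝ≥0∞) {s t : α} (hst : s ≠ t) :
    ∃ v, gdist len s v + len v t = gdist len s t := by
  have : Nonempty α := ⟨s⟩
  obtain ⟨v, hv⟩ := exists_eq_ciInf_of_finite (f := fun v => gdist len s v + len v t)
  refine ⟨v, le_antisymm ?_ (gdist_le_add len s v t)⟩
  refine hv.trans_le (le_iInf₂ fun p hp => ?_)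
  obtain ⟨h1, h2⟩ := hp
  obtain ⟨q, rfl⟩ := List.getLast?_eq_some_iff.1 h2
  rcases List.eq_nil_or_concat q with rfl | ⟨r, w, rfl⟩
  · exact absurd (by simpa using h1.symm) hst
  · simp only [List.concat_eq_append, List.append_assoc, List.cons_append, List.nil_append] at h1 ⊢
    rw [walkLen_append_pair]
    refine (iInf_le _ w).trans (add_le_add_left (gdist_le_walkLen len ⟨?_, by simp⟩) _)
    cases r <;> simpa using h1

theorem gdist_map_le {α β : Type*} (len : α → α → ℝ≥0∞) (len' : β → β → ℝ≥0∞) (f : α → β)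
    (hf : ∀ x y, len' (f x) (f y) ≤ len x y) (s t : α) :
    gdist len' (f s) (f t) ≤ gdist len s t := by
  have key : ∀ p : List α, walkLen len' (p.map f) ≤ walkLen len p := by
    intro p
    induction p with
    | nil => simp [walkLen]
    | cons a p ih =>
      cases p with
      | nil => simp [walkLen]
      | cons b p => exact add_le_add (hf a b) ih
  refine le_iInf₂ fun p hp => (gdist_le_walkLen len' (p := p.map f) ⟨?_, ?_⟩).trans (key p)
  · simp [hp.1]
  · simp [hp.2]

/-- layered-copy reachability characterization. `G_I` adds two
copies `v'`, `v''` of every vertex and, for every two-edge path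
`u → v → w` of `G` with `v ∈ I`, the edges `(u,v')` and `(v',w'')`. Then
`dist_{G_I}(s,t'') ≥ dist_G(s,t)`, with equality iff some shortest `s`-`t`
path of `G` has its second-to-last vertex in `I`. -/
theorem stmt_17 [Fintype V] (Adj : V → V → Prop) (I : Set V)
    (lenG : V → V → ℝ≥0∞) (hlenG : ∀ u v, lenG u v = if Adj u v then 1 else ∞)
    (lenGI : V ⊕ V ⊕ V → V ⊕ V ⊕ V → ℝ≥0∞)
    (hlenGI : ∀ x y, lenGI x y =
      match x, y with
      | Sum.inl u, Sum.inl v => lenG u v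
      | Sum.inl u, Sum.inr (Sum.inl v) => if v ∈ I ∧ Adj u v then 1 else ∞
      | Sum.inr (Sum.inl v), Sum.inr (Sum.inr w) =>
          if v ∈ I ∧ Adj v w then 1 else ∞
      | _, _ => ∞)
    (s t : V) (hfin : gdist lenG s t ≠ ∞) (h2 : 2 ≤ gdist lenG s t) :
    gdist lenG s t ≤ gdist lenGI (Sum.inl s) (Sum.inr (Sum.inr t)) ∧
      (gdist lenGI (Sum.inl s) (Sum.inr (Sum.inr t)) = gdist lenG s t ↔
        ∃ v ∈ I, Adj v t ∧ gdist lenG s v + 1 = gdist lenG s t) := by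
  have hproj : ∀ x, gdist lenG s (Sum.elim id (Sum.elim id id) x) ≤ gdist lenGI (Sum.inl s) x :=
    fun x => gdist_map_le lenGI lenG (Sum.elim id (Sum.elim id id)) (by
      rintro (x | x | x) (y | y | y) <;> simp only [hlenGI, hlenG, Sum.elim_inl, Sum.elim_inr, id]
        <;> split_ifs <;> simp_all) (Sum.inl s) x
  have hincl : ∀ u, gdist lenGI (Sum.inl s) (Sum.inl u) ≤ gdist lenG s u :=
    fun u => gdist_map_le lenG lenGI Sum.inl (fun x y => by rw [hlenGI]) s u
  have hle : gdist lenG s t ≤ gdist lenGI (Sum.inl s) (Sum.inr (Sum.inr t)) :=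
    hproj (Sum.inr (Sum.inr t))
  refine ⟨hle, fun heq => ?_, ?_⟩
  · obtain ⟨y, hy⟩ := exists_gdist_eq lenGI
      (show (Sum.inl s : V ⊕ V ⊕ V) ≠ Sum.inr (Sum.inr t) by simp)
    rw [heq, hlenGI] at hy
    -- Only middle-layer vertices have edges into the top layer; elsewhere the distance is infinite.
    rcases y with y | v | y
    · exact absurd (by simpa using hy.symm) hfin
    · by_cases hv : v ∈ I ∧ Adj v t
      · simp only [hv, and_self, if_true] at hy
        refine ⟨v, hv.1, hv.2, le_antisymm ?_ ?_⟩
        · rw [← hy]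
          exact add_le_add_left (hproj (Sum.inr (Sum.inl v))) 1
        · simpa [hlenG, hv.2] using gdist_le_add lenG s v t
      · exact absurd (by simpa [hv] using hy.symm) hfin
    · exact absurd (by simpa using hy.symm) hfin
  · rintro ⟨v, hvI, hvt, hv⟩
    have hsv : s ≠ v := by
      rintro rfl
      rw [← hv, gdist_self] at h2
      norm_num at h2
    obtain ⟨u, hu⟩ := exists_gdist_eq lenG hsv
    have huv : Adj u v := by
      by_contra h
      rw [hlenG, if_neg h, add_top] at hu
      rw [← hu, top_add] at hv
      exact hfin hv.symm
    refine le_antisymm ?_ hle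
    calc gdist lenGI (Sum.inl s) (Sum.inr (Sum.inr t))
        ≤ gdist lenGI (Sum.inl s) (Sum.inr (Sum.inl v)) + 1 := by
          simpa [hlenGI, hvI, hvt] using
            gdist_le_add lenGI (Sum.inl s) (Sum.inr (Sum.inl v)) (Sum.inr (Sum.inr t))
      _ ≤ gdist lenGI (Sum.inl s) (Sum.inl u) + 1 + 1 := by
          gcongr
          simpa [hlenGI, hvI, huv] using
            gdist_le_add lenGI (Sum.inl s) (Sum.inl u) (Sum.inr (Sum.inl v))
      _ ≤ gdist lenG s u + 1 + 1 := by
          gcongr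
          exact hincl u
      _ = gdist lenG s t := by
          rw [← hv, ← hu, hlenG, if_pos huv]
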